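/- Let n ≥ 1 and let f : ℝⁿ → ℝ be a nonnegative, continuous, compactly supported function with ∫_{ℝⁿ} f dx = 1, and let u(t,x) = ∫_{ℝⁿ} (4πt)^{-n/2} exp(-‖x-y‖²/(4t)) f(y) dy. Then the function t ↦ H_n(u(t)) := H(u(t)) - (n/2) log(4πe t) is nonincreasing on (0,∞); indeed (d/dt) H_n(u(t)) = -∫_{ℝⁿ} (Δ log u + n/(2t)) u dx ≤ 0 for every t > 0. -/

import Mathlib

open Real MeasureTheory

/-- The heat semigroup solution on `ℝⁿ` with initial datum `f`. -/
noncomputable def heatSol (n : ℕ) (f : EuclideanSpace ℝ (Fin n) → ℝ)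
    (t : ℝ) (x : EuclideanSpace ℝ (Fin n)) : ℝ :=
  ∫ y, (4 * π * t) ^ (-(n : ℝ) / 2) * Real.exp (-‖x - y‖ ^ 2 / (4 * t)) * f y

/-- The Boltzmann–Shannon entropy of the heat solution at time `t`. -/
noncomputable def shannonEntropy (n : ℕ) (f : EuclideanSpace ℝ (Fin n) → ℝ) (t : ℝ) : ℝ :=
  -∫ x, heatSol n f t x * Real.log (heatSol n f t x)

/-- The Hessian matrix of a function on `ℝⁿ`. -/
noncomputable def hessianMatrix (n : ℕ) (g : EuclideanSpace ℝ (Fin n) → ℝ)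
    (x : EuclideanSpace ℝ (Fin n)) : Matrix (Fin n) (Fin n) ℝ :=
  fun i j => iteratedFDeriv ℝ 2 g x ![EuclideanSpace.single i 1, EuclideanSpace.single j 1]

/-- The Laplacian of a function on `ℝⁿ`, i.e. the trace of its Hessian. -/
noncomputable def laplacian (n : ℕ) (g : EuclideanSpace ℝ (Fin n) → ℝ)
    (x : EuclideanSpace ℝ (Fin n)) : ℝ :=
  ∑ i, hessianMatrix n g x i i

open scoped ContDiff Topology

/-- Convolution of a kernel `g` with the datum `f`. -/
noncomputable def cU {n : ℕ} (f g : EuclideanSpace ℝ (Fin n) → ℝ)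
    (x : EuclideanSpace ℝ (Fin n)) : ℝ := ∫ y, g (x - y) * f y

/-- The heat kernel. -/
noncomputable def hK (n : ℕ) (t : ℝ) (z : EuclideanSpace ℝ (Fin n)) : ℝ :=
  (4 * π * t) ^ (-(n : ℝ) / 2) * Real.exp (-‖z‖ ^ 2 / (4 * t))

lemma heatSol_eq {n : ℕ} (f : EuclideanSpace ℝ (Fin n) → ℝ) (t : ℝ) :
    heatSol n f t = cU f (hK n t) := rfl

lemma cU_integrable {n : ℕ} {f g : EuclideanSpace ℝ (Fin n) → ℝ} (hf : Continuous f)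
    (hs : HasCompactSupport f) (hg : Continuous g) (x : EuclideanSpace ℝ (Fin n)) :
    Integrable (fun y => g (x - y) * f y) := by
  apply Continuous.integrable_of_hasCompactSupport (by fun_prop)
  exact hs.mul_left

lemma cU_hasFDerivAt {n : ℕ} {f g : EuclideanSpace ℝ (Fin n) → ℝ} (hf : Continuous f)
    (hs : HasCompactSupport f) (hg : ContDiff ℝ 1 g) (x : EuclideanSpace ℝ (Fin n)) :
    HasFDerivAt (cU f g) (∫ y, f y • fderiv ℝ g (x - y)) x := by
  have hcd : Continuous (fderiv ℝ g) := hg.continuous_fderiv one_ne_zero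
  have hcomp : IsCompact (Metric.closedBall x 1 ×ˢ tsupport f) :=
    (isCompact_closedBall x 1).prod hs
  obtain ⟨C, hC⟩ := hcomp.exists_bound_of_continuousOn
    (f := fun p : EuclideanSpace ℝ (Fin n) × EuclideanSpace ℝ (Fin n) =>
      fderiv ℝ g (p.1 - p.2)) (by fun_prop)
  refine (hasFDerivAt_integral_of_dominated_of_fderiv_le (𝕜 := ℝ)
    (F := fun x y => g (x - y) * f y) (F' := fun x y => f y • fderiv ℝ g (x - y))
    (bound := fun y => C * ‖f y‖) (s := Metric.closedBall x 1)
    (Metric.closedBall_mem_nhds x one_pos) ?_ ?_ ?_ ?_ ?_ ?_)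
  · filter_upwards with x'
    have : Continuous (fun y => g (x' - y) * f y) := by
      have := hg.continuous
      fun_prop
    exact this.aestronglyMeasurable
  · exact cU_integrable hf hs hg.continuous x
  · have : Continuous (fun y => f y • fderiv ℝ g (x - y)) := by fun_prop
    exact this.aestronglyMeasurable
  · filter_upwards with y z hz
    by_cases hy : y ∈ tsupport f
    · rw [norm_smul, mul_comm]
      gcongr
      exact hC (z, y) ⟨hz, hy⟩
    · simp [image_eq_zero_of_notMem_tsupport hy]
  · exact ((hf.integrable_of_hasCompactSupport hs).norm.const_mul C)
  · filter_upwards with y z _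
    have h1 : HasFDerivAt (fun x => g (x - y)) (fderiv ℝ g (z - y)) z := by
      have h2 := ((hg.differentiable one_ne_zero) (z - y)).hasFDerivAt
      have h3 := h2.comp z ((hasFDerivAt_id z).sub_const y)
      simpa [Function.comp_def] using h3
    exact h1.mul_const (f y)

lemma cU_fderiv {n : ℕ} {f g : EuclideanSpace ℝ (Fin n) → ℝ} (hf : Continuous f)
    (hs : HasCompactSupport f) (hg : ContDiff ℝ 1 g) (x v : EuclideanSpace ℝ (Fin n)) :
    fderiv ℝ (cU f g) x v = cU f (fun z => fderiv ℝ g z v) x := by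
  rw [(cU_hasFDerivAt hf hs hg x).fderiv, cU, ContinuousLinearMap.integral_apply]
  · apply integral_congr_ae
    filter_upwards with y
    simp [mul_comm]
  · have hcd : Continuous (fderiv ℝ g) := hg.continuous_fderiv one_ne_zero
    apply Continuous.integrable_of_hasCompactSupport (by fun_prop)
    exact hs.smul_right

lemma cU_contDiff {n : ℕ} {f : EuclideanSpace ℝ (Fin n) → ℝ} (hf : Continuous f)
    (hs : HasCompactSupport f) (m : ℕ) : ∀ g : EuclideanSpace ℝ (Fin n) → ℝ,
    ContDiff ℝ ∞ g → ContDiff ℝ m (cU f g) := by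
  induction m with
  | zero =>
    intro g hg
    rw [Nat.cast_zero, contDiff_zero]
    have : Differentiable ℝ (cU f g) := fun x =>
      (cU_hasFDerivAt hf hs (hg.of_le (by exact_mod_cast le_top)) x).differentiableAt
    exact this.continuous
  | succ m ih =>
    intro g hg
    have h1 : ContDiff ℝ 1 g := hg.of_le (by exact_mod_cast le_top)
    rw [Nat.cast_succ, contDiff_succ_iff_fderiv_apply]
    refine ⟨fun x => (cU_hasFDerivAt hf hs h1 x).differentiableAt, by simp, fun v => ?_⟩
    have : (fun x => fderiv ℝ (cU f g) x v) = cU f (fun z => fderiv ℝ g z v) := by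
      funext x; exact cU_fderiv hf hs h1 x v
    rw [this]
    apply ih
    have h2 : ContDiff ℝ ∞ (fderiv ℝ g) := hg.fderiv_right (by simp)
    exact h2.clm_apply contDiff_const

lemma hK_contDiff (n : ℕ) (t : ℝ) : ContDiff ℝ ∞ (hK n t) := by
  unfold hK
  have : ContDiff ℝ ∞ (fun z : EuclideanSpace ℝ (Fin n) => ‖z‖ ^ 2) := contDiff_norm_sq ℝ
  fun_prop

lemma hK_pos (n : ℕ) {t : ℝ} (ht : 0 < t) (z : EuclideanSpace ℝ (Fin n)) : 0 < hK n t z := by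
  unfold hK; positivity

/-- second derivative factor -/
lemma hK_fderiv (n : ℕ) {t : ℝ} (ht : 0 < t) (i : Fin n) (z : EuclideanSpace ℝ (Fin n)) :
    fderiv ℝ (hK n t) z (EuclideanSpace.single i 1) = -(z i / (2 * t)) * hK n t z := by
  have h0 := (hasStrictFDerivAt_norm_sq z).hasFDerivAt
  have h1 := (((h0.neg.mul_const (4 * t)⁻¹).exp).const_mul ((4 * π * t) ^ (-(n : ℝ) / 2)))
  have h2 : hK n t = fun z => (4 * π * t) ^ (-(n : ℝ) / 2) * Real.exp (-‖z‖ ^ 2 * (4 * t)⁻¹) := by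
    funext z; simp [hK, div_eq_mul_inv]
  rw [h2]
  erw [h1.fderiv]
  simp [EuclideanSpace.inner_single_right]
  field_simp
  ring

lemma hK_fderiv2 (n : ℕ) {t : ℝ} (ht : 0 < t) (i : Fin n) (z : EuclideanSpace ℝ (Fin n)) :
    fderiv ℝ (fun z => -(z i / (2 * t)) * hK n t z) z (EuclideanSpace.single i 1)
      = (z i ^ 2 / (4 * t ^ 2) - 1 / (2 * t)) * hK n t z := by
  have h1 := (((hK_contDiff n t).differentiable (by simp)) z).hasFDerivAt
  have h2 : HasFDerivAt (fun z : EuclideanSpace ℝ (Fin n) => z i)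
    (EuclideanSpace.proj (𝕜 := ℝ) i) z := (EuclideanSpace.proj (𝕜 := ℝ) i).hasFDerivAt
  have h3 := ((h2.mul_const (2 * t)⁻¹).neg).mul h1
  have h4 : (fun z => -(z i / (2 * t)) * hK n t z)
     = fun z => -(z i * (2 * t)⁻¹) * hK n t z := by
    simp [div_eq_mul_inv]
  rw [h4]
  erw [h3.fderiv]
  simp [hK_fderiv n ht]
  field_simp
  ring

lemma hK_hasDerivAt (n : ℕ) {t : ℝ} (ht : 0 < t) (z : EuclideanSpace ℝ (Fin n)) :
    HasDerivAt (fun s => hK n s z) ((‖z‖ ^ 2 / (4 * t ^ 2) - n / (2 * t)) * hK n t z) t := by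
  have h1 : HasDerivAt (fun s : ℝ => (4 * π * s) ^ (-(n : ℝ) / 2))
      ((4 * π) * (-(n : ℝ) / 2) * (4 * π * t) ^ (-(n : ℝ) / 2 - 1)) t := by
    have := ((hasDerivAt_id t).const_mul (4 * π)).rpow_const (p := -(n : ℝ) / 2)
      (Or.inl (by simp; positivity))
    simpa using this
  have h2 : HasDerivAt (fun s : ℝ => Real.exp (-‖z‖ ^ 2 / (4 * s)))
      (Real.exp (-‖z‖ ^ 2 / (4 * t)) * (‖z‖ ^ 2 / (4 * t ^ 2))) t := by
    apply HasDerivAt.exp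
    have := (((hasDerivAt_id t).const_mul 4).inv (by simp; positivity)).const_mul (-‖z‖ ^ 2)
    convert! this using 1
    simp
    field_simp
  convert! h1.mul h2 using 1
  rw [Real.rpow_sub_one (by positivity)]
  unfold hK
  field_simp
  ring

lemma heat_time {n : ℕ} {f : EuclideanSpace ℝ (Fin n) → ℝ} (hf : Continuous f)
    (hs : HasCompactSupport f) {t : ℝ} (ht : 0 < t) (x : EuclideanSpace ℝ (Fin n)) :
    HasDerivAt (fun s => heatSol n f s x)
      (cU f (fun z => (‖z‖ ^ 2 / (4 * t ^ 2) - n / (2 * t)) * hK n t z) x) t := by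
  have hcomp : IsCompact (Set.Icc (t / 2) (2 * t) ×ˢ tsupport f) :=
    isCompact_Icc.prod hs
  obtain ⟨C, hC⟩ := hcomp.exists_bound_of_continuousOn
    (f := fun p : ℝ × EuclideanSpace ℝ (Fin n) =>
      (‖x - p.2‖ ^ 2 / (4 * p.1 ^ 2) - n / (2 * p.1)) * hK n p.1 (x - p.2)) (by
      unfold hK
      intro p hp
      have hp1 : 0 < p.1 := lt_of_lt_of_le (by positivity) hp.1.1
      apply ContinuousAt.continuousWithinAt
      have : ContinuousAt (fun p : ℝ × EuclideanSpace ℝ (Fin n) =>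
          (4 * π * p.1) ^ (-(n : ℝ) / 2)) p := by
        apply ContinuousAt.rpow_const (by fun_prop)
        left; positivity
      have h2 : 4 * p.1 ^ 2 ≠ 0 := by positivity
      have h3 : 2 * p.1 ≠ 0 := by positivity
      have h4 : 4 * p.1 ≠ 0 := by positivity
      fun_prop (disch := assumption))
  have hcont : ∀ s, Continuous (hK n s) := fun s => (hK_contDiff n s).continuous
  refine (hasDerivAt_integral_of_dominated_loc_of_deriv_le (𝕜 := ℝ)
    (F := fun s y => hK n s (x - y) * f y)
    (F' := fun s y => ((‖x - y‖ ^ 2 / (4 * s ^ 2) - n / (2 * s)) * hK n s (x - y)) * f y)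
    (bound := fun y => C * ‖f y‖) (s := Set.Icc (t / 2) (2 * t))
    (Icc_mem_nhds (by linarith) (by linarith)) ?_ ?_ ?_ ?_ ?_ ?_).2
  · filter_upwards with s
    have := hcont s
    have : Continuous (fun y => hK n s (x - y) * f y) := by
      fun_prop
    exact this.aestronglyMeasurable
  · exact cU_integrable hf hs (hcont t) x
  · have := hcont t
    have : Continuous (fun y => ((‖x - y‖ ^ 2 / (4 * t ^ 2) - n / (2 * t)) * hK n t (x - y)) * f y) := by
      fun_prop
    exact this.aestronglyMeasurable
  · filter_upwards with y z hz
    by_cases hy : y ∈ tsupport f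
    · rw [norm_mul]
      gcongr
      exact hC (z, y) ⟨hz, hy⟩
    · simp [image_eq_zero_of_notMem_tsupport hy]
  · exact ((hf.integrable_of_hasCompactSupport hs).norm.const_mul C)
  · filter_upwards with y z hz
    exact (hK_hasDerivAt n (lt_of_lt_of_le (by positivity) hz.1) (x - y)).mul_const (f y)

lemma norm_sub_sq_bounds {E : Type*} [NormedAddCommGroup E] {R : ℝ} (x y : E)
    (hy : ‖y‖ ≤ R) :
    ‖x - y‖ ^ 2 ≤ 2 * ‖x‖ ^ 2 + 2 * R ^ 2 ∧ ‖x‖ ^ 2 / 2 - R ^ 2 ≤ ‖x - y‖ ^ 2 := by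
  have h1 : ‖x - y‖ ≤ ‖x‖ + ‖y‖ := norm_sub_le x y
  have h2 : ‖x‖ ≤ ‖x - y‖ + ‖y‖ := by
    have := norm_add_le (x - y) y
    simpa using this
  have h0 := norm_nonneg y
  have h3 := norm_nonneg x
  have h4 := norm_nonneg (x - y)
  have h5 : ‖y‖ ^ 2 ≤ R ^ 2 := by gcongr
  constructor
  · nlinarith [sq_nonneg (‖x‖ - ‖y‖), mul_self_le_mul_self h4 h1]
  · nlinarith [sq_nonneg (‖x - y‖ - ‖y‖), mul_self_le_mul_self h3 h2]

lemma cU_mono {n : ℕ} {f g h : EuclideanSpace ℝ (Fin n) → ℝ} (hf : Continuous f)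
    (hs : HasCompactSupport f) (hnn : ∀ x, 0 ≤ f x) (hg : Continuous g) (hh : Continuous h)
    (x : EuclideanSpace ℝ (Fin n)) (hle : ∀ y, f y ≠ 0 → g (x - y) ≤ h (x - y)) :
    cU f g x ≤ cU f h x := by
  apply integral_mono (cU_integrable hf hs hg x) (cU_integrable hf hs hh x)
  intro y
  by_cases hy : f y = 0
  · simp [hy]
  · exact mul_le_mul_of_nonneg_right (hle y hy) (hnn y)

lemma cU_const_mul {n : ℕ} {f g : EuclideanSpace ℝ (Fin n) → ℝ} (c : ℝ)
    (x : EuclideanSpace ℝ (Fin n)) : cU f (fun z => c * g z) x = c * cU f g x := by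
  simp only [cU, mul_assoc, integral_const_mul]

lemma cU_add {n : ℕ} {f g h : EuclideanSpace ℝ (Fin n) → ℝ} (hf : Continuous f)
    (hs : HasCompactSupport f) (hg : Continuous g) (hh : Continuous h)
    (x : EuclideanSpace ℝ (Fin n)) : cU f (fun z => g z + h z) x = cU f g x + cU f h x := by
  simp only [cU, add_mul]
  exact integral_add (cU_integrable hf hs hg x) (cU_integrable hf hs hh x)

lemma cU_const {n : ℕ} {f : EuclideanSpace ℝ (Fin n) → ℝ} (hint : ∫ x, f x = 1) (c : ℝ)
    (x : EuclideanSpace ℝ (Fin n)) : cU f (fun _ => c) x = c := by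
  simp only [cU, integral_const_mul, hint, mul_one]

lemma cU_bound {n : ℕ} {f g : EuclideanSpace ℝ (Fin n) → ℝ} (hf : Continuous f)
    (hs : HasCompactSupport f) (hnn : ∀ x, 0 ≤ f x) {R : ℝ} (hR : ∀ y, f y ≠ 0 → ‖y‖ ≤ R)
    {t : ℝ} (ht : 0 < t) (hg : Continuous g) {C : ℝ} (hC : 0 ≤ C)
    (hgC : ∀ z, |g z| ≤ C * (1 + ‖z‖ ^ 2) * hK n t z) (x : EuclideanSpace ℝ (Fin n)) :
    |cU f g x| ≤ C * (2 * (1 + R ^ 2)) * (1 + ‖x‖ ^ 2) * cU f (hK n t) x := by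
  have hKc := (hK_contDiff n t).continuous
  have key : ∀ y, f y ≠ 0 → |g (x - y)| ≤
      C * (2 * (1 + R ^ 2)) * (1 + ‖x‖ ^ 2) * hK n t (x - y) := by
    intro y hy
    refine (hgC _).trans ?_
    have h1 := (norm_sub_sq_bounds x y (hR y hy)).1
    have h2 := hK_pos n ht (x - y)
    rw [mul_assoc C (2 * (1 + R ^ 2)) (1 + ‖x‖ ^ 2)]
    refine mul_le_mul_of_nonneg_right (mul_le_mul_of_nonneg_left ?_ hC) h2.le
    nlinarith [mul_nonneg (sq_nonneg R) (sq_nonneg ‖x‖)]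
  rw [abs_le, ← cU_const_mul, ← neg_one_mul, ← cU_const_mul]
  constructor
  · apply cU_mono hf hs hnn (by fun_prop) hg
    intro y hy
    have := (abs_le.1 (key y hy)).1
    linarith
  · apply cU_mono hf hs hnn hg (by fun_prop)
    intro y hy
    exact (abs_le.1 (key y hy)).2

lemma heat_lower {n : ℕ} {f : EuclideanSpace ℝ (Fin n) → ℝ} (hf : Continuous f)
    (hs : HasCompactSupport f) (hnn : ∀ x, 0 ≤ f x) (hint : ∫ x, f x = 1)
    {R : ℝ} (hR : ∀ y, f y ≠ 0 → ‖y‖ ≤ R)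
    {t : ℝ} (ht : 0 < t) (x : EuclideanSpace ℝ (Fin n)) :
    (4 * π * t) ^ (-(n : ℝ) / 2) * Real.exp (-((‖x‖ ^ 2 + R ^ 2) / (2 * t))) ≤
      cU f (hK n t) x := by
  have hKc := (hK_contDiff n t).continuous
  rw [← cU_const hint ((4 * π * t) ^ (-(n : ℝ) / 2) * _) x]
  apply cU_mono hf hs hnn (by fun_prop) hKc
  intro y hy
  unfold hK
  have h1 := (norm_sub_sq_bounds x y (hR y hy)).1
  gcongr
  rw [neg_div, neg_le_neg_iff, div_le_div_iff₀ (by positivity) (by positivity)]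
  nlinarith

lemma heat_upper {n : ℕ} {f : EuclideanSpace ℝ (Fin n) → ℝ} (hf : Continuous f)
    (hs : HasCompactSupport f) (hnn : ∀ x, 0 ≤ f x) (hint : ∫ x, f x = 1)
    {R : ℝ} (hR : ∀ y, f y ≠ 0 → ‖y‖ ≤ R)
    {t : ℝ} (ht : 0 < t) (x : EuclideanSpace ℝ (Fin n)) :
    cU f (hK n t) x ≤
    (4 * π * t) ^ (-(n : ℝ) / 2) * Real.exp (R ^ 2 / (4 * t) - ‖x‖ ^ 2 / (8 * t)) := by
  have hKc := (hK_contDiff n t).continuous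
  rw [← cU_const hint ((4 * π * t) ^ (-(n : ℝ) / 2) * _) x]
  apply cU_mono hf hs hnn hKc (by fun_prop)
  intro y hy
  unfold hK
  have h1 := (norm_sub_sq_bounds x y (hR y hy)).2
  gcongr
  have : R ^ 2 / (4 * t) - ‖x‖ ^ 2 / (8 * t) = -(‖x‖ ^ 2 / 2 - R ^ 2) / (4 * t) := by
    field_simp; ring
  rw [this]
  gcongr

lemma heat_pos {n : ℕ} {f : EuclideanSpace ℝ (Fin n) → ℝ} (hf : Continuous f)
    (hs : HasCompactSupport f) (hnn : ∀ x, 0 ≤ f x) (hint : ∫ x, f x = 1)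
    {R : ℝ} (hR : ∀ y, f y ≠ 0 → ‖y‖ ≤ R)
    {t : ℝ} (ht : 0 < t) (x : EuclideanSpace ℝ (Fin n)) : 0 < cU f (hK n t) x :=
  lt_of_lt_of_le (by positivity) (heat_lower hf hs hnn hint hR ht x)

/-- Locally uniform (in time) bounds. -/
lemma heat_unif {n : ℕ} {f : EuclideanSpace ℝ (Fin n) → ℝ} (hf : Continuous f)
    (hs : HasCompactSupport f) (hnn : ∀ x, 0 ≤ f x) (hint : ∫ x, f x = 1)
    {R : ℝ} (hR : ∀ y, f y ≠ 0 → ‖y‖ ≤ R) {t : ℝ} (ht : 0 < t) :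
    ∃ C β : ℝ, 0 < C ∧ 0 < β ∧ ∀ s ∈ Set.Icc (t / 2) (2 * t), ∀ x : EuclideanSpace ℝ (Fin n),
      cU f (hK n s) x ≤ C * Real.exp (-β * ‖x‖ ^ 2) ∧
      |Real.log (cU f (hK n s) x)| ≤ C * (1 + ‖x‖ ^ 2) := by
  set c₀ := (4 * π * (t / 2)) ^ (-(n : ℝ) / 2) with hc₀
  set C₁ := c₀ * Real.exp (R ^ 2 / (2 * t)) with hC₁
  set L := (n : ℝ) / 2 * (|Real.log (4 * π * (t / 2))| + |Real.log (4 * π * (2 * t))|) with hL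
  set C₂ := L + (1 + R ^ 2) / t with hC₂
  have hc0 : 0 < c₀ := by positivity
  have hC1 : 0 < C₁ := by positivity
  have hLn : 0 ≤ L := by positivity
  have hC2 : 0 < C₂ := by positivity
  refine ⟨C₁ + C₂, 1 / (16 * t), by positivity, by positivity, ?_⟩
  intro s hst x
  have hsp : 0 < s := lt_of_lt_of_le (by positivity) hst.1
  have hup := heat_upper hf hs hnn hint hR hsp x
  have hlo := heat_lower hf hs hnn hint hR hsp x
  have hup' : cU f (hK n s) x ≤ C₁ * Real.exp (-(1 / (16 * t)) * ‖x‖ ^ 2) := by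
    refine hup.trans ?_
    rw [hC₁, mul_assoc c₀, ← Real.exp_add]
    have h1 : (4 * π * s) ^ (-(n : ℝ) / 2) ≤ c₀ := by
      apply Real.rpow_le_rpow_of_nonpos (by positivity)
      · have := hst.1
        gcongr
      · have : (0 : ℝ) ≤ n := by positivity
        linarith
    have h2 : R ^ 2 / (4 * s) ≤ R ^ 2 / (2 * t) := by
      have := hst.1
      apply div_le_div_of_nonneg_left (by positivity) (by positivity)
      linarith
    have h3 : ‖x‖ ^ 2 / (16 * t) ≤ ‖x‖ ^ 2 / (8 * s) := by
      have := hst.2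
      apply div_le_div_of_nonneg_left (by positivity) (by positivity)
      linarith
    have h4 : -(1 / (16 * t)) * ‖x‖ ^ 2 = - (‖x‖ ^ 2 / (16 * t)) := by ring
    rw [h4]
    gcongr
    linarith
  refine ⟨hup'.trans ?_, ?_⟩
  · gcongr
    linarith
  · have hpos := heat_pos hf hs hnn hint hR hsp x
    have hcs : 0 < (4 * π * s) ^ (-(n : ℝ) / 2) := by positivity
    have l1 := Real.log_le_log hpos hup
    have l2 := Real.log_le_log (by positivity) hlo
    rw [Real.log_mul hcs.ne' (Real.exp_ne_zero _), Real.log_exp,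
      Real.log_rpow (by positivity)] at l1 l2
    have l3 : Real.log (4 * π * s) ≤ Real.log (4 * π * (2 * t)) := by
      apply Real.log_le_log (by positivity)
      have := hst.2
      gcongr
    have l4 : Real.log (4 * π * (t / 2)) ≤ Real.log (4 * π * s) := by
      apply Real.log_le_log (by positivity)
      have := hst.1
      gcongr
    have l5 : |Real.log (4 * π * s)| ≤
        |Real.log (4 * π * (t / 2))| + |Real.log (4 * π * (2 * t))| := by
      have a1 := neg_abs_le (Real.log (4 * π * (t / 2)))
      have a2 := le_abs_self (Real.log (4 * π * (2 * t)))
      have a3 := abs_nonneg (Real.log (4 * π * (t / 2)))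
      have a4 := abs_nonneg (Real.log (4 * π * (2 * t)))
      rw [abs_le]
      constructor <;> linarith
    have l6 : |-(n : ℝ) / 2 * Real.log (4 * π * s)| ≤ L := by
      rw [abs_mul, neg_div, abs_neg, abs_of_nonneg (by positivity : (0 : ℝ) ≤ n / 2), hL]
      gcongr
    obtain ⟨l7, l8⟩ := abs_le.1 l6
    have m1 : (‖x‖ ^ 2 + R ^ 2) / (2 * s) ≤ (‖x‖ ^ 2 + R ^ 2) / t := by
      have := hst.1
      gcongr
      linarith
    have m2 : R ^ 2 / (4 * s) ≤ (‖x‖ ^ 2 + R ^ 2) / t := by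
      have := hst.1
      gcongr
      · nlinarith [sq_nonneg ‖x‖]
      · linarith
    have m3 : 0 ≤ ‖x‖ ^ 2 / (8 * s) := by positivity
    have m4 : L + (‖x‖ ^ 2 + R ^ 2) / t ≤ (C₁ + C₂) * (1 + ‖x‖ ^ 2) := by
      have e1 : (‖x‖ ^ 2 + R ^ 2) / t ≤ (1 + R ^ 2) / t * (1 + ‖x‖ ^ 2) := by
        rw [div_mul_eq_mul_div]
        gcongr
        nlinarith [mul_nonneg (sq_nonneg R) (sq_nonneg ‖x‖), sq_nonneg R, sq_nonneg ‖x‖]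
      have e2 : 0 ≤ L * ‖x‖ ^ 2 := by positivity
      have e3 : 0 ≤ C₁ * (1 + ‖x‖ ^ 2) := by positivity
      rw [hC₂]
      nlinarith
    rw [abs_le]
    constructor <;> linarith

lemma gauss_integrable (n : ℕ) {b : ℝ} (hb : 0 < b) :
    Integrable (fun x : EuclideanSpace ℝ (Fin n) => Real.exp (-b * ‖x‖ ^ 2)) := by
  apply Integrable.of_integral_ne_zero
  rw [GaussianFourier.integral_rexp_neg_mul_sq_norm hb]
  positivity

lemma gauss_poly_integrable (n : ℕ) {b : ℝ} (hb : 0 < b) :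
    Integrable (fun x : EuclideanSpace ℝ (Fin n) =>
      (1 + ‖x‖ ^ 2) ^ 2 * Real.exp (-b * ‖x‖ ^ 2)) := by
  refine ((gauss_integrable n (half_pos hb)).const_mul ((1 + 4 / b) ^ 2)).mono' ?_ ?_
  · exact (by fun_prop : Continuous _).aestronglyMeasurable
  · filter_upwards with x
    rw [Real.norm_of_nonneg (by positivity)]
    have h1 : 1 + ‖x‖ ^ 2 ≤ (1 + 4 / b) * Real.exp (b * ‖x‖ ^ 2 / 4) := by
      have h2 := Real.add_one_le_exp (b * ‖x‖ ^ 2 / 4)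
      calc 1 + ‖x‖ ^ 2 ≤ (1 + 4 / b) * (b * ‖x‖ ^ 2 / 4 + 1) := by
            have : (1 + 4 / b) * (b * ‖x‖ ^ 2 / 4 + 1)
              = 1 + ‖x‖ ^ 2 + (4 / b + b * ‖x‖ ^ 2 / 4) := by field_simp; ring
            rw [this]
            have : 0 ≤ 4 / b + b * ‖x‖ ^ 2 / 4 := by positivity
            linarith
        _ ≤ _ := by gcongr
    calc (1 + ‖x‖ ^ 2) ^ 2 * Real.exp (-b * ‖x‖ ^ 2)
        ≤ ((1 + 4 / b) * Real.exp (b * ‖x‖ ^ 2 / 4)) ^ 2 * Real.exp (-b * ‖x‖ ^ 2) := by gcongr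
      _ = (1 + 4 / b) ^ 2 * Real.exp (-(b / 2) * ‖x‖ ^ 2) := by
        rw [mul_pow, ← Real.exp_nat_mul, mul_assoc, ← Real.exp_add]
        congr 2
        push_cast
        ring

/-- Total mass is conserved. -/
lemma heat_mass {n : ℕ} {f : EuclideanSpace ℝ (Fin n) → ℝ} (hf : Continuous f)
    (hs : HasCompactSupport f) (hint : ∫ x, f x = 1) {t : ℝ} (ht : 0 < t) :
    ∫ x, cU f (hK n t) x = 1 := by
  have hfi : Integrable f := hf.integrable_of_hasCompactSupport hs
  have hKe : hK n t = fun z => (4 * π * t) ^ (-(n : ℝ) / 2) *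
      Real.exp (-(4 * t)⁻¹ * ‖z‖ ^ 2) := by
    funext z; unfold hK; congr 2; field_simp
  have hKi : Integrable (hK n t) := by
    rw [hKe]
    exact (gauss_integrable n (by positivity)).const_mul _
  have hK1 : ∫ z, hK n t z = 1 := by
    rw [hKe, integral_const_mul, GaussianFourier.integral_rexp_neg_mul_sq_norm (by positivity)]
    rw [finrank_euclideanSpace_fin, div_inv_eq_mul, neg_div, Real.rpow_neg (by positivity),
      show π * (4 * t) = 4 * π * t by ring]
    exact inv_mul_cancel₀ (by positivity)
  have h := integral_convolution (μ := (volume : Measure (EuclideanSpace ℝ (Fin n))))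
    (ν := volume) (ContinuousLinearMap.mul ℝ ℝ) hfi hKi
  rw [hint, hK1] at h
  simp only [ContinuousLinearMap.mul_apply', mul_one] at h
  rw [← h]
  congr 1
  funext x
  simp only [cU, convolution, ContinuousLinearMap.mul_apply']
  congr 1
  funext y
  ring

lemma abs_coord_sq_le {n : ℕ} (z : EuclideanSpace ℝ (Fin n)) (i : Fin n) :
    (z i) ^ 2 ≤ ‖z‖ ^ 2 := by
  have := PiLp.norm_apply_le z i
  rw [Real.norm_eq_abs] at this
  rw [← sq_abs (z i)]
  gcongr

/-- first derivative kernel -/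
noncomputable def hK1 (n : ℕ) (t : ℝ) (i : Fin n) (z : EuclideanSpace ℝ (Fin n)) : ℝ :=
  -(z i / (2 * t)) * hK n t z

/-- second derivative kernel -/
noncomputable def hK2 (n : ℕ) (t : ℝ) (i : Fin n) (z : EuclideanSpace ℝ (Fin n)) : ℝ :=
  (z i ^ 2 / (4 * t ^ 2) - 1 / (2 * t)) * hK n t z

/-- time derivative kernel -/
noncomputable def hKT (n : ℕ) (t : ℝ) (z : EuclideanSpace ℝ (Fin n)) : ℝ :=
  (‖z‖ ^ 2 / (4 * t ^ 2) - n / (2 * t)) * hK n t z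

lemma contDiff_coord {n : ℕ} (i : Fin n) :
    ContDiff ℝ ∞ (fun z : EuclideanSpace ℝ (Fin n) => z i) :=
  (EuclideanSpace.proj (𝕜 := ℝ) i : EuclideanSpace ℝ (Fin n) →L[ℝ] ℝ).contDiff

lemma hK1_contDiff (n : ℕ) (t : ℝ) (i : Fin n) : ContDiff ℝ ∞ (hK1 n t i) := by
  unfold hK1
  have h1 := hK_contDiff n t
  have h2 := contDiff_coord i
  exact ((h2.div_const _).neg).mul h1

lemma hK2_contDiff (n : ℕ) (t : ℝ) (i : Fin n) : ContDiff ℝ ∞ (hK2 n t i) := by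
  unfold hK2
  have h1 := hK_contDiff n t
  have h2 := contDiff_coord i
  exact (((h2.pow 2).div_const _).sub contDiff_const).mul h1

lemma hKT_contDiff (n : ℕ) (t : ℝ) : ContDiff ℝ ∞ (hKT n t) := by
  unfold hKT
  have h1 := hK_contDiff n t
  have h2 : ContDiff ℝ ∞ (fun z : EuclideanSpace ℝ (Fin n) => ‖z‖ ^ 2) := contDiff_norm_sq ℝ
  exact ((h2.div_const _).sub contDiff_const).mul h1

lemma hK1_bound (n : ℕ) {t : ℝ} (ht : 0 < t) (i : Fin n) (z : EuclideanSpace ℝ (Fin n)) :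
    |hK1 n t i z| ≤ 1 / (2 * t) * (1 + ‖z‖ ^ 2) * hK n t z := by
  have hp := hK_pos n ht z
  unfold hK1
  rw [abs_mul, abs_of_pos hp, abs_neg, abs_div, abs_of_pos (by positivity : 0 < 2 * t)]
  refine mul_le_mul_of_nonneg_right ?_ hp.le
  rw [div_mul_eq_mul_div, one_mul]
  gcongr
  have := abs_coord_sq_le z i
  rw [← sq_abs] at this
  nlinarith [sq_nonneg (|z i| - 1)]

lemma hK2_bound (n : ℕ) {t : ℝ} (ht : 0 < t) (i : Fin n) (z : EuclideanSpace ℝ (Fin n)) :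
    |hK2 n t i z| ≤ (1 / (4 * t ^ 2) + 1 / (2 * t)) * (1 + ‖z‖ ^ 2) * hK n t z := by
  have hp := hK_pos n ht z
  unfold hK2
  rw [abs_mul, abs_of_pos hp]
  refine mul_le_mul_of_nonneg_right ?_ hp.le
  have h1 := abs_coord_sq_le z i
  have h2 : z i ^ 2 / (4 * t ^ 2) ≤ 1 / (4 * t ^ 2) * ‖z‖ ^ 2 := by
    rw [div_mul_eq_mul_div, one_mul]; gcongr
  have h3 : 0 ≤ z i ^ 2 / (4 * t ^ 2) := by positivity
  have h4 : 0 ≤ 1 / (2 * t) := by positivity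
  have h5 : 0 ≤ 1 / (4 * t ^ 2) := by positivity
  have h6 : 0 ≤ 1 / (2 * t) * ‖z‖ ^ 2 := by positivity
  rw [abs_le]
  constructor <;> nlinarith

lemma hKT_bound (n : ℕ) {t : ℝ} (ht : 0 < t) (z : EuclideanSpace ℝ (Fin n)) :
    |hKT n t z| ≤ (1 / (4 * t ^ 2) + n / (2 * t)) * (1 + ‖z‖ ^ 2) * hK n t z := by
  have hp := hK_pos n ht z
  unfold hKT
  rw [abs_mul, abs_of_pos hp]
  refine mul_le_mul_of_nonneg_right ?_ hp.le
  have h2 : ‖z‖ ^ 2 / (4 * t ^ 2) = 1 / (4 * t ^ 2) * ‖z‖ ^ 2 := by ring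
  have h3 : 0 ≤ ‖z‖ ^ 2 / (4 * t ^ 2) := by positivity
  have h4 : 0 ≤ n / (2 * t) := by positivity
  have h5 : 0 ≤ 1 / (4 * t ^ 2) := by positivity
  have h6 : 0 ≤ n / (2 * t) * ‖z‖ ^ 2 := by positivity
  rw [abs_le]
  constructor <;> nlinarith

lemma cU_T_eq {n : ℕ} {f : EuclideanSpace ℝ (Fin n) → ℝ} (hf : Continuous f)
    (hs : HasCompactSupport f) (t : ℝ) (x : EuclideanSpace ℝ (Fin n)) :
    cU f (hKT n t) x = ∑ i, cU f (hK2 n t i) x := by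
  simp only [cU]
  rw [← integral_finsetSum _ (fun i _ => cU_integrable hf hs (hK2_contDiff n t i).continuous x)]
  congr 1
  funext y
  rw [← Finset.sum_mul]
  congr 1
  simp only [hKT, hK2]
  rw [← Finset.sum_mul, Finset.sum_sub_distrib, ← Finset.sum_div,
    EuclideanSpace.real_norm_sq_eq]
  simp
  left
  ring

lemma cU_cauchy {n : ℕ} {f : EuclideanSpace ℝ (Fin n) → ℝ} (hf : Continuous f)
    (hs : HasCompactSupport f) (hnn : ∀ x, 0 ≤ f x) {t : ℝ} (ht : 0 < t) (i : Fin n)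
    (x : EuclideanSpace ℝ (Fin n)) (hpos : 0 < cU f (hK n t) x) :
    cU f (hK1 n t i) x ^ 2 / cU f (hK n t) x ≤
      cU f (hK2 n t i) x + 1 / (2 * t) * cU f (hK n t) x := by
  set u := cU f (hK n t) x
  set a := cU f (hK1 n t i) x
  set l := a / u
  have c0 := (hK_contDiff n t).continuous
  have c1 := (hK1_contDiff n t i).continuous
  have c2 := (hK2_contDiff n t i).continuous
  have h : 0 ≤ cU f (fun z => (hK2 n t i z + 1 / (2 * t) * hK n t z) +
      ((-2 * l) * hK1 n t i z + l ^ 2 * hK n t z)) x := by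
    apply integral_nonneg
    intro y
    have hp := hK_pos n ht (x - y)
    refine mul_nonneg ?_ (hnn y)
    have : (hK2 n t i (x - y) + 1 / (2 * t) * hK n t (x - y)) +
      ((-2 * l) * hK1 n t i (x - y) + l ^ 2 * hK n t (x - y))
      = ((x - y) i / (2 * t) + l) ^ 2 * hK n t (x - y) := by
      unfold hK1 hK2
      field_simp
      ring
    beta_reduce
    rw [this]
    positivity
  rw [cU_add hf hs (by fun_prop) (by fun_prop), cU_add hf hs (by fun_prop) (by fun_prop),
    cU_add hf hs (by fun_prop) (by fun_prop), cU_const_mul, cU_const_mul, cU_const_mul] at h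
  have e1 : -2 * l * a + l ^ 2 * u = - (a ^ 2 / u) := by
    simp only [l]
    field_simp
    ring
  change 0 ≤ cU f (hK2 n t i) x + 1 / (2 * t) * u + (-2 * l * a + l ^ 2 * u) at h
  rw [e1] at h
  linarith

lemma cU_fderiv1 {n : ℕ} {f : EuclideanSpace ℝ (Fin n) → ℝ} (hf : Continuous f)
    (hs : HasCompactSupport f) {t : ℝ} (ht : 0 < t) (i : Fin n) (x : EuclideanSpace ℝ (Fin n)) :
    fderiv ℝ (cU f (hK n t)) x (EuclideanSpace.single i 1) = cU f (hK1 n t i) x := by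
  rw [cU_fderiv hf hs ((hK_contDiff n t).of_le (by exact_mod_cast le_top))]
  congr 1
  funext z
  exact hK_fderiv n ht i z

lemma cU_fderiv2 {n : ℕ} {f : EuclideanSpace ℝ (Fin n) → ℝ} (hf : Continuous f)
    (hs : HasCompactSupport f) {t : ℝ} (ht : 0 < t) (i : Fin n) (x : EuclideanSpace ℝ (Fin n)) :
    fderiv ℝ (cU f (hK1 n t i)) x (EuclideanSpace.single i 1) = cU f (hK2 n t i) x := by
  rw [cU_fderiv hf hs ((hK1_contDiff n t i).of_le (by exact_mod_cast le_top))]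
  congr 1
  funext z
  exact hK_fderiv2 n ht i z

lemma log_fderiv {n : ℕ} {f : EuclideanSpace ℝ (Fin n) → ℝ} (hf : Continuous f)
    (hs : HasCompactSupport f) {t : ℝ} (ht : 0 < t) (hpos : ∀ x, 0 < cU f (hK n t) x) (i : Fin n)
    (x : EuclideanSpace ℝ (Fin n)) :
    fderiv ℝ (fun y => Real.log (cU f (hK n t) y)) x (EuclideanSpace.single i 1)
      = cU f (hK1 n t i) x / cU f (hK n t) x := by
  have hd : DifferentiableAt ℝ (cU f (hK n t)) x :=
    (cU_contDiff hf hs 1 _ (hK_contDiff n t)).differentiable (by simp) x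
  rw [fderiv.log hd (hpos x).ne']
  simp only [_root_.smul_apply, smul_eq_mul, cU_fderiv1 hf hs ht i x]
  field_simp

lemma laplacian_log {n : ℕ} {f : EuclideanSpace ℝ (Fin n) → ℝ} (hf : Continuous f)
    (hs : HasCompactSupport f) {t : ℝ} (ht : 0 < t) (hpos : ∀ x, 0 < cU f (hK n t) x)
    (x : EuclideanSpace ℝ (Fin n)) :
    laplacian n (fun y => Real.log (cU f (hK n t) y)) x = ∑ i,
      (cU f (hK2 n t i) x - cU f (hK1 n t i) x ^ 2 / cU f (hK n t) x) / cU f (hK n t) x := by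
  unfold laplacian hessianMatrix
  apply Finset.sum_congr rfl
  intro i _
  have hu := cU_contDiff hf hs 2 _ (hK_contDiff n t)
  have hlog : ContDiff ℝ 2 (fun y => Real.log (cU f (hK n t) y)) :=
    ContDiff.log hu (fun x => (hpos x).ne')
  have hd1 : Differentiable ℝ (fderiv ℝ (fun y => Real.log (cU f (hK n t) y))) :=
    (hlog.fderiv_right (m := 1) (by norm_num)).differentiable (by simp)
  rw [iteratedFDeriv_two_apply]
  simp only [Matrix.cons_val_zero, Matrix.cons_val_one]
  have e1 : fderiv ℝ (fderiv ℝ (fun y => Real.log (cU f (hK n t) y))) x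
      (EuclideanSpace.single i 1) (EuclideanSpace.single i 1)
      = fderiv ℝ (fun y => fderiv ℝ (fun y => Real.log (cU f (hK n t) y)) y
        (EuclideanSpace.single i 1)) x (EuclideanSpace.single i 1) := by
    have := ((hd1 x).hasFDerivAt.clm_apply
      (hasFDerivAt_const (EuclideanSpace.single i (1 : ℝ)) x)).fderiv
    rw [this]
    simp
  rw [e1]
  have e2 : (fun y => fderiv ℝ (fun y => Real.log (cU f (hK n t) y)) y
        (EuclideanSpace.single i 1)) = fun y => cU f (hK1 n t i) y * (cU f (hK n t) y)⁻¹ := by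
    funext y
    rw [log_fderiv hf hs ht hpos i y, div_eq_mul_inv]
  rw [e2]
  have hd0 : HasFDerivAt (cU f (hK n t)) _ x := (hu.differentiable (by simp) x).hasFDerivAt
  have hdA : HasFDerivAt (cU f (hK1 n t i)) _ x :=
    ((cU_contDiff hf hs 1 _ (hK1_contDiff n t i)).differentiable (by simp) x).hasFDerivAt
  have hinv := (hasDerivAt_inv (hpos x).ne').comp_hasFDerivAt x hd0
  have := (hdA.mul hinv).fderiv
  erw [this]
  simp only [_root_.add_apply, _root_.smul_apply, smul_eq_mul,
    cU_fderiv1 hf hs ht i x, cU_fderiv2 hf hs ht i x, Function.comp_apply]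
  have := (hpos x).ne'
  field_simp
  ring

/-- Domination gives integrability. -/
lemma dom_integrable {n : ℕ} {C D β : ℝ} {h u : EuclideanSpace ℝ (Fin n) → ℝ} (hh : Continuous h)
    (hβ : 0 < β) (hD : 0 ≤ D) (hu : ∀ x, u x ≤ C * Real.exp (-β * ‖x‖ ^ 2))
    (hb : ∀ x, |h x| ≤ D * (1 + ‖x‖ ^ 2) ^ 2 * u x) : Integrable h := by
  refine ((gauss_poly_integrable n hβ).const_mul (D * C)).mono' hh.aestronglyMeasurable ?_
  filter_upwards with x
  rw [Real.norm_eq_abs]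
  refine (hb x).trans ?_
  calc D * (1 + ‖x‖ ^ 2) ^ 2 * u x
      ≤ D * (1 + ‖x‖ ^ 2) ^ 2 * (C * Real.exp (-β * ‖x‖ ^ 2)) := by gcongr; exact hu x
    _ = _ := by ring

lemma parts_data {n : ℕ} {f : EuclideanSpace ℝ (Fin n) → ℝ} (hf : Continuous f)
    (hs : HasCompactSupport f) (hnn : ∀ x, 0 ≤ f x) (hint : ∫ x, f x = 1)
    {R : ℝ} (hR : ∀ y, f y ≠ 0 → ‖y‖ ≤ R) {t : ℝ} (ht : 0 < t) (i : Fin n) :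
    Integrable (cU f (hK n t)) ∧
    Integrable (cU f (hK2 n t i)) ∧
    Integrable (fun x => cU f (hK1 n t i) x ^ 2 / cU f (hK n t) x) ∧
    Integrable (fun x => Real.log (cU f (hK n t) x) * cU f (hK2 n t i) x) ∧
    ∫ x, cU f (hK2 n t i) x = 0 ∧
    ∫ x, Real.log (cU f (hK n t) x) * cU f (hK2 n t i) x =
      -∫ x, cU f (hK1 n t i) x ^ 2 / cU f (hK n t) x := by
  obtain ⟨C, β, hC, hβ, hb⟩ := heat_unif hf hs hnn hint hR ht
  have htm : t ∈ Set.Icc (t / 2) (2 * t) := ⟨by linarith, by linarith⟩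
  have hu := fun x => (hb t htm x).1
  have hl := fun x => (hb t htm x).2
  have hpos := fun x => heat_pos hf hs hnn hint hR ht x
  have du : Differentiable ℝ (cU f (hK n t)) :=
    (cU_contDiff hf hs 1 _ (hK_contDiff n t)).differentiable (by simp)
  have dA : Differentiable ℝ (cU f (hK1 n t i)) :=
    (cU_contDiff hf hs 1 _ (hK1_contDiff n t i)).differentiable (by simp)
  have cu := du.continuous
  have cA := dA.continuous
  have cB : Continuous (cU f (hK2 n t i)) :=
    (cU_contDiff hf hs 0 _ (hK2_contDiff n t i)).continuous
  have dlog : Differentiable ℝ (fun x => Real.log (cU f (hK n t) x)) :=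
    fun x => (du x).log (hpos x).ne'
  have clog := dlog.continuous
  have cq : Continuous (fun x => cU f (hK1 n t i) x ^ 2 / cU f (hK n t) x) :=
    (cA.pow 2).div cu (fun x => (hpos x).ne')
  obtain ⟨a, ha, hA⟩ : ∃ a : ℝ, 0 ≤ a ∧ ∀ x, |cU f (hK1 n t i) x| ≤
      a * (1 + ‖x‖ ^ 2) * cU f (hK n t) x :=
    ⟨_, by positivity, cU_bound hf hs hnn hR ht (hK1_contDiff n t i).continuous
      (by positivity) (hK1_bound n ht i)⟩
  obtain ⟨b, hb0, hB⟩ : ∃ b : ℝ, 0 ≤ b ∧ ∀ x, |cU f (hK2 n t i) x| ≤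
      b * (1 + ‖x‖ ^ 2) * cU f (hK n t) x :=
    ⟨_, by positivity, cU_bound hf hs hnn hR ht (hK2_contDiff n t i).continuous
      (by positivity) (hK2_bound n ht i)⟩
  have hone : ∀ x : EuclideanSpace ℝ (Fin n), 1 + ‖x‖ ^ 2 ≤ (1 + ‖x‖ ^ 2) ^ 2 := by
    intro x
    nlinarith [sq_nonneg ‖x‖, sq_nonneg (‖x‖ ^ 2)]
  have iu : Integrable (cU f (hK n t)) := by
    apply dom_integrable cu hβ zero_le_one hu
    intro x
    rw [abs_of_pos (hpos x), one_mul]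
    have := hone x
    have h2 : (1 : ℝ) ≤ (1 + ‖x‖ ^ 2) ^ 2 := by nlinarith [sq_nonneg ‖x‖]
    nlinarith [hpos x]
  have lin : ∀ (g : EuclideanSpace ℝ (Fin n) → ℝ) (d : ℝ), 0 ≤ d → Continuous g →
      (∀ x, |g x| ≤ d * (1 + ‖x‖ ^ 2) * cU f (hK n t) x) → Integrable g := by
    intro g d hd hg hgd
    apply dom_integrable hg hβ hd hu
    intro x
    refine (hgd x).trans ?_
    have := hone x
    exact mul_le_mul_of_nonneg_right (mul_le_mul_of_nonneg_left this hd) (hpos x).le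
  have quad : ∀ (g : EuclideanSpace ℝ (Fin n) → ℝ) (d : ℝ), 0 ≤ d → Continuous g →
      (∀ x, |g x| ≤ d * (1 + ‖x‖ ^ 2) * cU f (hK n t) x) →
      Integrable (fun x => Real.log (cU f (hK n t) x) * g x) := by
    intro g d hd hg hgd
    apply dom_integrable (clog.mul hg) hβ (mul_nonneg hC.le hd) hu
    intro x
    rw [Pi.mul_apply, abs_mul]
    calc _ ≤ (C * (1 + ‖x‖ ^ 2)) * (d * (1 + ‖x‖ ^ 2) * cU f (hK n t) x) :=
          mul_le_mul (hl x) (hgd x) (abs_nonneg _) (by positivity)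
      _ = _ := by ring
  have iA := lin _ a ha cA hA
  have iB := lin _ b hb0 cB hB
  have iq : Integrable (fun x => cU f (hK1 n t i) x ^ 2 / cU f (hK n t) x) := by
    apply dom_integrable cq hβ (sq_nonneg a) hu
    intro x
    have hp := hpos x
    rw [abs_of_nonneg (by positivity), div_le_iff₀ hp, ← sq_abs]
    calc _ ≤ (a * (1 + ‖x‖ ^ 2) * cU f (hK n t) x) ^ 2 :=
          pow_le_pow_left₀ (abs_nonneg _) (hA x) 2
      _ = _ := by ring
  have iLA := quad _ a ha cA hA
  have iLB := quad _ b hb0 cB hB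
  refine ⟨iu, iB, iq, iLB, ?_, ?_⟩
  · have := integral_mul_fderiv_eq_neg_fderiv_mul_of_integrable
      (μ := (volume : Measure (EuclideanSpace ℝ (Fin n))))
      (f := fun _ => (1 : ℝ)) (g := cU f (hK1 n t i)) (v := EuclideanSpace.single i 1)
      (by simp) (by simpa [cU_fderiv2 hf hs ht i] using iB) (by simpa using iA)
      (fun x _ => by fun_prop) (fun x _ => dA x)
    simpa [cU_fderiv2 hf hs ht i] using this
  · have e : ∀ x, cU f (hK1 n t i) x / cU f (hK n t) x * cU f (hK1 n t i) x
      = cU f (hK1 n t i) x ^ 2 / cU f (hK n t) x := fun x => by ring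
    have := integral_mul_fderiv_eq_neg_fderiv_mul_of_integrable
      (μ := (volume : Measure (EuclideanSpace ℝ (Fin n))))
      (f := fun x => Real.log (cU f (hK n t) x)) (g := cU f (hK1 n t i))
      (v := EuclideanSpace.single i 1)
      (by simpa only [log_fderiv hf hs ht hpos i, e] using iq)
      (by simpa only [cU_fderiv2 hf hs ht i] using iLB) iLA
      (fun x _ => dlog x) (fun x _ => dA x)
    simpa only [cU_fderiv2 hf hs ht i, log_fderiv hf hs ht hpos i, e] using this

lemma entropy_deriv {n : ℕ} {f : EuclideanSpace ℝ (Fin n) → ℝ} (hf : Continuous f)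
    (hs : HasCompactSupport f) (hnn : ∀ x, 0 ≤ f x) (hint : ∫ x, f x = 1)
    {R : ℝ} (hR : ∀ y, f y ≠ 0 → ‖y‖ ≤ R) {t : ℝ} (ht : 0 < t) :
    HasDerivAt (shannonEntropy n f)
      (∑ i, ∫ x, cU f (hK1 n t i) x ^ 2 / cU f (hK n t) x) t := by
  obtain ⟨C, β, hC, hβ, hb⟩ := heat_unif hf hs hnn hint hR ht
  have htm : t ∈ Set.Icc (t / 2) (2 * t) := ⟨by linarith, by linarith⟩
  have hpos : ∀ s, 0 < s → ∀ x, 0 < cU f (hK n s) x :=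
    fun s hs' x => heat_pos hf hs hnn hint hR hs' x
  have cu : ∀ s, Continuous (cU f (hK n s)) := fun s =>
    (cU_contDiff hf hs 0 _ (hK_contDiff n s)).continuous
  have cT : ∀ s, Continuous (cU f (hKT n s)) := fun s =>
    (cU_contDiff hf hs 0 _ (hKT_contDiff n s)).continuous
  have clog : ∀ s, 0 < s → Continuous (fun x => Real.log (cU f (hK n s) x)) := fun s hs' =>
    (cu s).log (fun x => (hpos s hs' x).ne')
  set D := (1 / t ^ 2 + n / t) * (2 * (1 + R ^ 2)) with hD
  have hD0 : 0 ≤ D := by positivity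
  have hT : ∀ s ∈ Set.Icc (t / 2) (2 * t), ∀ x, |cU f (hKT n s) x| ≤
      D * (1 + ‖x‖ ^ 2) * cU f (hK n s) x := by
    intro s hst x
    have hsp : 0 < s := lt_of_lt_of_le (by positivity) hst.1
    refine cU_bound hf hs hnn hR hsp (hKT_contDiff n s).continuous (by positivity) ?_ x
    intro z
    refine (hKT_bound n hsp z).trans ?_
    have hp := hK_pos n hsp z
    refine mul_le_mul_of_nonneg_right (mul_le_mul_of_nonneg_right ?_ (by positivity)) hp.le
    have := hst.1
    apply add_le_add
    · apply div_le_div_of_nonneg_left (by positivity) (by positivity)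
      nlinarith
    · apply div_le_div_of_nonneg_left (by positivity) (by positivity)
      linarith
  have key := (hasDerivAt_integral_of_dominated_loc_of_deriv_le (𝕜 := ℝ)
    (μ := (volume : Measure (EuclideanSpace ℝ (Fin n))))
    (F := fun s x => heatSol n f s x * Real.log (heatSol n f s x))
    (F' := fun s x => cU f (hKT n s) x * (Real.log (cU f (hK n s) x) + 1)) (x₀ := t)
    (bound := fun x => (D * (C + 1) * C) * ((1 + ‖x‖ ^ 2) ^ 2 * Real.exp (-β * ‖x‖ ^ 2)))
    (s := Set.Icc (t / 2) (2 * t))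
    (Icc_mem_nhds (by linarith) (by linarith)) ?_ ?_ ?_ ?_ ?_ ?_).2
  · have hne := key.neg
    have hfun : shannonEntropy n f = -(fun s => ∫ x, heatSol n f s x * Real.log (heatSol n f s x)) := by
      funext s; rfl
    rw [hfun]
    convert! hne using 1
    have hp := fun i => parts_data hf hs hnn hint hR ht i
    have e1 : (fun x => cU f (hKT n t) x * (Real.log (cU f (hK n t) x) + 1)) =
        fun x => ∑ i, (Real.log (cU f (hK n t) x) * cU f (hK2 n t i) x + cU f (hK2 n t i) x) := by
      funext x
      rw [cU_T_eq hf hs, Finset.sum_mul]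
      apply Finset.sum_congr rfl
      intro i _
      ring
    rw [e1, integral_finsetSum Finset.univ (f := fun i x =>
        Real.log (cU f (hK n t) x) * cU f (hK2 n t i) x + cU f (hK2 n t i) x)
        (fun i _ => (hp i).2.2.2.1.add (hp i).2.1), ← Finset.sum_neg_distrib]
    apply Finset.sum_congr rfl
    intro i _
    rw [integral_add (hp i).2.2.2.1 (hp i).2.1, (hp i).2.2.2.2.1, (hp i).2.2.2.2.2]
    ring
  · filter_upwards [lt_mem_nhds ht] with s hsp
    exact ((cu s).mul (clog s hsp)).aestronglyMeasurable
  · apply dom_integrable ((cu t).mul (clog t ht)) hβ hC.le (fun x => (hb t htm x).1)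
    intro x
    have hp := hpos t ht x
    rw [Pi.mul_apply, abs_mul, abs_of_pos hp]
    have h1 := (hb t htm x).2
    have h2 : C * (1 + ‖x‖ ^ 2) ≤ C * (1 + ‖x‖ ^ 2) ^ 2 := by
      apply mul_le_mul_of_nonneg_left _ hC.le
      nlinarith [sq_nonneg ‖x‖, sq_nonneg (‖x‖ ^ 2)]
    rw [mul_comm]
    exact mul_le_mul_of_nonneg_right (h1.trans h2) hp.le
  · exact ((cT t).mul ((clog t ht).add continuous_const)).aestronglyMeasurable
  · filter_upwards with x s hst
    have hsp : 0 < s := lt_of_lt_of_le (by positivity) hst.1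
    have hp := hpos s hsp x
    rw [Real.norm_eq_abs, abs_mul]
    have h1 := (hb s hst x).2
    have h3 : |Real.log (cU f (hK n s) x) + 1| ≤ (C + 1) * (1 + ‖x‖ ^ 2) := by
      refine (abs_add_le _ _).trans ?_
      rw [abs_one]
      nlinarith [sq_nonneg ‖x‖]
    calc _ ≤ (D * (1 + ‖x‖ ^ 2) * cU f (hK n s) x) * ((C + 1) * (1 + ‖x‖ ^ 2)) :=
          mul_le_mul (hT s hst x) h3 (abs_nonneg _) (by positivity)
      _ = (D * (C + 1) * (1 + ‖x‖ ^ 2) ^ 2) * cU f (hK n s) x := by ring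
      _ ≤ (D * (C + 1) * (1 + ‖x‖ ^ 2) ^ 2) * (C * Real.exp (-β * ‖x‖ ^ 2)) :=
          mul_le_mul_of_nonneg_left (hb s hst x).1 (by positivity)
      _ = _ := by ring
  · exact (gauss_poly_integrable n hβ).const_mul _
  · filter_upwards with x s hst
    have hsp : 0 < s := lt_of_lt_of_le (by positivity) hst.1
    have hp := hpos s hsp x
    have h1 : HasDerivAt (fun s => heatSol n f s x) (cU f (hKT n s) x) s :=
      heat_time hf hs hsp x
    have h2 := h1.mul (h1.log (by rw [heatSol_eq]; exact hp.ne'))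
    convert! h2 using 1
    rw [heatSol_eq]
    field_simp

lemma heat_rhs {n : ℕ} {f : EuclideanSpace ℝ (Fin n) → ℝ} (hf : Continuous f)
    (hs : HasCompactSupport f) (hnn : ∀ x, 0 ≤ f x) (hint : ∫ x, f x = 1)
    {R : ℝ} (hR : ∀ y, f y ≠ 0 → ‖y‖ ≤ R) (hn : 1 ≤ n) {t : ℝ} (ht : 0 < t) :
    ∫ x, (laplacian n (fun y => Real.log (heatSol n f t y)) x + (n : ℝ) / (2 * t))
            * heatSol n f t x =
      (n : ℝ) / (2 * t) - ∑ i, ∫ x, cU f (hK1 n t i) x ^ 2 / cU f (hK n t) x ∧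
    0 ≤ ∫ x, (laplacian n (fun y => Real.log (heatSol n f t y)) x + (n : ℝ) / (2 * t))
            * heatSol n f t x := by
  have hpos : ∀ x, 0 < cU f (hK n t) x := fun x => heat_pos hf hs hnn hint hR ht x
  have e1 : (fun x => (laplacian n (fun y => Real.log (heatSol n f t y)) x + (n : ℝ) / (2 * t))
      * heatSol n f t x) = fun x => (∑ i, (cU f (hK2 n t i) x -
        cU f (hK1 n t i) x ^ 2 / cU f (hK n t) x)) + (n : ℝ) / (2 * t) * cU f (hK n t) x := by
    funext x
    rw [heatSol_eq, laplacian_log hf hs ht hpos, add_mul, Finset.sum_mul]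
    congr 1
    apply Finset.sum_congr rfl
    intro i _
    exact div_mul_cancel₀ _ (hpos x).ne'
  rw [e1]
  have hp := fun i => parts_data hf hs hnn hint hR ht i
  constructor
  · rw [integral_add, integral_finsetSum, integral_const_mul, heat_mass hf hs hint ht, mul_one,
      add_comm, sub_eq_add_neg, ← Finset.sum_neg_distrib]
    · congr 1
      apply Finset.sum_congr rfl
      intro i _
      rw [integral_sub (hp i).2.1 (hp i).2.2.1, (hp i).2.2.2.2.1, zero_sub]
    · exact fun i _ => (hp i).2.1.sub (hp i).2.2.1
    · exact integrable_finsetSum _ fun i _ => (hp i).2.1.sub (hp i).2.2.1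
    · exact (hp ⟨0, hn⟩).1.const_mul _
  · apply integral_nonneg
    intro x
    have e2 : (n : ℝ) / (2 * t) * cU f (hK n t) x
        = ∑ _i : Fin n, 1 / (2 * t) * cU f (hK n t) x := by
      simp
      ring
    beta_reduce
    rw [e2, ← Finset.sum_add_distrib]
    apply Finset.sum_nonneg
    intro i _
    have := cU_cauchy hf hs hnn ht i x (hpos x)
    linarith

/-- The renormalized entropy `H_n(u(t)) = H(u(t)) - (n/2)log(4πe t)` is nonincreasing:
its derivative is `-∫ (Δ log u + n/(2t)) u dx ≤ 0`. -/
theorem renormalized_entropy_nonincreasing (n : ℕ) (hn : 1 ≤ n)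
    (f : EuclideanSpace ℝ (Fin n) → ℝ)
    (hf_cont : Continuous f) (hf_nonneg : ∀ x, 0 ≤ f x)
    (hf_supp : HasCompactSupport f)
    (hf_int : ∫ x, f x = 1) :
    (∀ t : ℝ, 0 < t →
      HasDerivAt (fun s => shannonEntropy n f s
          - ((n : ℝ) / 2) * Real.log (4 * π * Real.exp 1 * s))
        (-∫ x, (laplacian n (fun y => Real.log (heatSol n f t y)) x + (n : ℝ) / (2 * t))
            * heatSol n f t x) t ∧
      (-∫ x, (laplacian n (fun y => Real.log (heatSol n f t y)) x + (n : ℝ) / (2 * t))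
            * heatSol n f t x) ≤ 0) ∧
    (∀ s t : ℝ, 0 < s → s ≤ t →
      shannonEntropy n f t - ((n : ℝ) / 2) * Real.log (4 * π * Real.exp 1 * t) ≤
        shannonEntropy n f s - ((n : ℝ) / 2) * Real.log (4 * π * Real.exp 1 * s)) := by
  obtain ⟨R, hR⟩ : ∃ R : ℝ, ∀ y, f y ≠ 0 → ‖y‖ ≤ R := by
    obtain ⟨R, hR⟩ := hf_supp.isBounded.exists_norm_le
    exact ⟨R, fun y hy => hR y (subset_tsupport f hy)⟩
  have main : ∀ t : ℝ, 0 < t →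
      HasDerivAt (fun s => shannonEntropy n f s
          - ((n : ℝ) / 2) * Real.log (4 * π * Real.exp 1 * s))
        (-∫ x, (laplacian n (fun y => Real.log (heatSol n f t y)) x + (n : ℝ) / (2 * t))
            * heatSol n f t x) t ∧
      (-∫ x, (laplacian n (fun y => Real.log (heatSol n f t y)) x + (n : ℝ) / (2 * t))
            * heatSol n f t x) ≤ 0 := by
    intro t ht
    obtain ⟨h1, h2⟩ := heat_rhs hf_cont hf_supp hf_nonneg hf_int hR hn ht
    refine ⟨?_, by linarith⟩
    rw [h1]
    have h3 := entropy_deriv hf_cont hf_supp hf_nonneg hf_int hR ht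
    have h4 : HasDerivAt (fun s : ℝ => ((n : ℝ) / 2) * Real.log (4 * π * Real.exp 1 * s))
        ((n : ℝ) / (2 * t)) t := by
      have h5 : HasDerivAt (fun s : ℝ => 4 * π * Real.exp 1 * s) (4 * π * Real.exp 1) t := by
        simpa using (hasDerivAt_id t).const_mul (4 * π * Real.exp 1)
      have h6 := (h5.log (by positivity)).const_mul ((n : ℝ) / 2)
      convert! h6 using 1
      have := Real.exp_ne_zero 1
      have := Real.pi_ne_zero
      field_simp
    convert! h3.sub h4 using 1
    ring
  refine ⟨main, ?_⟩
  intro s t hs hst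
  have hanti : AntitoneOn (fun s => shannonEntropy n f s
          - ((n : ℝ) / 2) * Real.log (4 * π * Real.exp 1 * s)) (Set.Ioi 0) := by
    apply antitoneOn_of_deriv_nonpos (convex_Ioi 0)
    · intro r hr
      exact (main r hr).1.continuousAt.continuousWithinAt
    · intro r hr
      rw [interior_Ioi] at hr
      exact (main r hr).1.differentiableAt.differentiableWithinAt
    · intro r hr
      rw [interior_Ioi] at hr
      rw [(main r hr).1.deriv]
      exact (main r hr).2
  exact hanti hs (lt_of_lt_of_le hs hst) hst
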